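/- arXiv:1710.01108 — 3 statements merged into one kernel-verified Lean document; each statement's English description precedes it below -/
import Mathlib

section
/- Let f, g : I → ℝ be continuous and strictly monotone. Then A^[f] = A^[g] (i.e., A^[f](a) = A^[g](a) for every n ≥ 1 and every a ∈ Iⁿ) if and only if there exist real numbers α, β with α ≠ 0 such that f(x) = α·g(x) + β for all x ∈ I. -/
/-!
If `f = α g + β` on `I`, a point of `I` where `g` takes its average over `a` is a point where `f`
takes its average over `a`, and injectivity of `f` identifies the two means.

Conversely, only means of two variables are needed. Given `x < y` in `I`, choose `α`, `β` such that
`h = f - (α g + β)` vanishes at `x` and `y`. If `h` vanishes at `s < t`, it also vanishes at their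
common mean, which lies strictly between `s` and `t`. Hence the closed set of zeros of `h` in
`[x, y]` has no gaps (`eq_zero_of_zeros_between`), so it is all of `[x, y]`
(`exists_affine_on_Icc`). The coefficients are determined by the values at any two distinct points,
so those obtained on different subintervals agree.
-/

open Set Function Filter

/-- The quasi-arithmetic mean generated by `f` on the interval `I`,
applied to a vector `a ∈ Iⁿ`: `f⁻¹((f a₁ + ⋯ + f aₙ)/n)`, where the
inverse of `f` is taken on `I`. -/
noncomputable def qam (I : Set ℝ) (f : ℝ → ℝ) {n : ℕ} (a : Fin n → ℝ) : ℝ :=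
  Function.invFunOn f I ((∑ i, f (a i)) / n)

/-- The natural (pointwise) partial order on quasi-arithmetic means:
`A^[f] ≤ A^[g]` iff `A^[f](a) ≤ A^[g](a)` for every `n ≥ 1` and every `a ∈ Iⁿ`. -/
def qamLE (I : Set ℝ) (f g : ℝ → ℝ) : Prop :=
  ∀ n : ℕ, 1 ≤ n → ∀ a : Fin n → ℝ, (∀ i, a i ∈ I) → qam I f a ≤ qam I g a

/-- `A^[f] = A^[g]` : equality of the two quasi-arithmetic means as means. -/
def qamEQ (I : Set ℝ) (f g : ℝ → ℝ) : Prop :=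
  ∀ n : ℕ, 1 ≤ n → ∀ a : Fin n → ℝ, (∀ i, a i ∈ I) → qam I f a = qam I g a

/-- `f` is strictly monotone on `I` (strictly increasing or strictly decreasing). -/
def StrictMonoOrAntiOn (f : ℝ → ℝ) (I : Set ℝ) : Prop :=
  StrictMonoOn f I ∨ StrictAntiOn f I

theorem StrictMonoOrAntiOn.injOn {f : ℝ → ℝ} {I : Set ℝ} (h : StrictMonoOrAntiOn f I) :
    InjOn f I := by
  rcases h with h | h
  · exact h.injOn
  · exact h.injOn

/-- The average of `f` over a nonempty vector is attained on `I`, so the inverse in `qam` is never a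
junk value. -/
theorem qam_spec {I : Set ℝ} (hI : I.OrdConnected) {f : ℝ → ℝ} (hfc : ContinuousOn f I)
    {n : ℕ} (hn : 1 ≤ n) {a : Fin n → ℝ} (ha : ∀ i, a i ∈ I) :
    qam I f a ∈ I ∧ f (qam I f a) = (∑ i, f (a i)) / n := by
  have hconv : Convex ℝ (f '' I) :=
    (hI.isPreconnected.image f hfc).ordConnected.convex
  have hn0 : (n : ℝ) ≠ 0 := by
    have : n ≠ 0 := by omega
    exact_mod_cast this
  have hmem : (∑ i, f (a i)) / n ∈ f '' I := by
    have := hconv.sum_mem (t := Finset.univ) (w := fun _ : Fin n => (1 / n : ℝ))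
      (z := fun i => f (a i)) (fun _ _ => by positivity) (by simp [hn0])
      (fun i _ => mem_image_of_mem f (ha i))
    rwa [← Finset.smul_sum, smul_eq_mul, one_div_mul_eq_div] at this
  exact ⟨invFunOn_mem hmem, invFunOn_eq hmem⟩

/-- A continuous function that vanishes at the endpoints, and has a zero strictly between any two of
its zeros, vanishes identically: otherwise the last zero before and the first zero after a point
would bound a gap. -/
theorem eq_zero_of_zeros_between {h : ℝ → ℝ} {x y : ℝ} (hc : ContinuousOn h (Icc x y))
    (hx : h x = 0) (hy : h y = 0)
    (hmid : ∀ s ∈ Icc x y, ∀ t ∈ Icc x y, s < t → h s = 0 → h t = 0 → ∃ m ∈ Ioo s t, h m = 0)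
    {u : ℝ} (hu : u ∈ Icc x y) : h u = 0 := by
  by_contra hne
  have hZ : IsCompact (Icc x y ∩ h ⁻¹' {0}) :=
    isCompact_Icc.of_isClosed_subset
      (hc.preimage_isClosed_of_isClosed isClosed_Icc isClosed_singleton) inter_subset_left
  have hxy : x ≤ y := hu.1.trans hu.2
  obtain ⟨s, ⟨⟨hsI, hs0⟩, hsu⟩, hsmax⟩ :=
    (hZ.inter_right (isClosed_Iic (a := u))).exists_isGreatest
      ⟨x, ⟨⟨le_rfl, hxy⟩, hx⟩, hu.1⟩
  obtain ⟨t, ⟨⟨htI, ht0⟩, hut⟩, htmin⟩ :=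
    (hZ.inter_right (isClosed_Ici (a := u))).exists_isLeast
      ⟨y, ⟨⟨hxy, le_rfl⟩, hy⟩, hu.2⟩
  simp only [mem_preimage, mem_singleton_iff, mem_Iic, mem_Ici] at hs0 ht0 hsu hut
  have hst : s < t := by
    refine lt_of_le_of_ne (hsu.trans hut) fun hEq => hne ?_
    rw [le_antisymm (hut.trans hEq.ge) hsu, hs0]
  obtain ⟨m, hm, hm0⟩ := hmid s hsI t htI hst hs0 ht0
  have hmI : m ∈ Icc x y := ⟨hsI.1.trans hm.1.le, hm.2.le.trans htI.2⟩
  rcases le_total m u with hmu | hmu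
  · exact absurd (hsmax ⟨⟨hmI, hm0⟩, hmu⟩) (not_le.2 hm.1)
  · exact absurd (htmin ⟨⟨hmI, hm0⟩, hmu⟩) (not_le.2 hm.2)

/-- A point where a strictly monotone function takes the midpoint of its values at `s < t` lies
strictly between them. -/
theorem StrictMonoOrAntiOn.mem_Ioo_of_eq_midpoint {f : ℝ → ℝ} {I : Set ℝ}
    (hf : StrictMonoOrAntiOn f I) {s t m : ℝ} (hs : s ∈ I) (ht : t ∈ I) (hm : m ∈ I) (hst : s < t)
    (h : f m = (f s + f t) / 2) : m ∈ Ioo s t := by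
  rcases hf with hf | hf
  · have := hf hs ht hst
    exact ⟨(hf.lt_iff_lt hs hm).1 (by linarith), (hf.lt_iff_lt hm ht).1 (by linarith)⟩
  · have := hf hs ht hst
    exact ⟨(hf.lt_iff_gt hm hs).1 (by linarith), (hf.lt_iff_gt ht hm).1 (by linarith)⟩

theorem exists_affine_on_Icc {I : Set ℝ} (hI : I.OrdConnected) {f g : ℝ → ℝ}
    (hfc : ContinuousOn f I) (hgc : ContinuousOn g I)
    (hfm : StrictMonoOrAntiOn f I) (hgm : StrictMonoOrAntiOn g I) (h : qamEQ I f g)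
    {x y : ℝ} (hx : x ∈ I) (hy : y ∈ I) (hxy : x < y) :
    ∃ α β : ℝ, ∀ u ∈ Icc x y, f u = α * g u + β := by
  have hg : g y - g x ≠ 0 := fun h0 => hxy.ne' (hgm.injOn hy hx (sub_eq_zero.1 h0))
  have hsub : Icc x y ⊆ I := hI.out hx hy
  -- the line through `(g x, f x)` and `(g y, f y)`
  obtain ⟨α, hα⟩ : ∃ α, α * (g y - g x) = f y - f x := ⟨_, div_mul_cancel₀ _ hg⟩
  refine ⟨α, f x - α * g x, fun u hu => ?_⟩
  have key := eq_zero_of_zeros_between (h := fun v => f v - (α * g v + (f x - α * g x)))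
    (((hfc.sub ((continuousOn_const.mul hgc).add continuousOn_const))).mono hsub)
    (by ring) (by linear_combination -hα) ?_ hu
  · exact sub_eq_zero.1 key
  intro s hs t ht hst hs0 ht0
  have ha : ∀ i, (![s, t] : Fin 2 → ℝ) i ∈ I := by
    intro i
    fin_cases i
    · exact hsub hs
    · exact hsub ht
  obtain ⟨hmI, hmf⟩ := qam_spec hI hfc one_le_two ha
  obtain ⟨-, hmg⟩ := qam_spec hI hgc one_le_two ha
  rw [← h 2 one_le_two _ ha] at hmg
  simp only [Fin.sum_univ_two, Matrix.cons_val_zero, Matrix.cons_val_one, Nat.cast_ofNat]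
    at hmf hmg
  refine ⟨_, hfm.mem_Ioo_of_eq_midpoint (hsub hs) (hsub ht) hmI hst hmf, ?_⟩
  rw [hmf, hmg]
  linear_combination (hs0 + ht0) / 2

/-- `A^[f] = A^[g]` iff `f = α·g + β` on `I` for some `α ≠ 0`. -/
theorem qam_eq_iff_affine
    (I : Set ℝ) (hI : I.OrdConnected) (hInontriv : ∃ x ∈ I, ∃ y ∈ I, x < y)
    (f g : ℝ → ℝ) (hfc : ContinuousOn f I) (hgc : ContinuousOn g I)
    (hfm : StrictMonoOrAntiOn f I) (hgm : StrictMonoOrAntiOn g I) :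
    qamEQ I f g ↔ ∃ α β : ℝ, α ≠ 0 ∧ ∀ x ∈ I, f x = α * g x + β := by
  constructor
  · intro h
    obtain ⟨x, hx, y, hy, hxy⟩ := hInontriv
    obtain ⟨α, β, hαβ⟩ := exists_affine_on_Icc hI hfc hgc hfm hgm h hx hy hxy
    have hfx := hαβ x ⟨le_rfl, hxy.le⟩
    have hfy := hαβ y ⟨hxy.le, le_rfl⟩
    refine ⟨α, β, ?_, fun z hz => ?_⟩
    · rintro rfl
      exact hxy.ne (hfm.injOn hx hy (by rw [hfx, hfy]; ring))
    -- an interval containing `x`, `y` and `z`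
    have hu : min x z ∈ I := by
      rcases min_choice x z with h | h <;> rw [h] <;> assumption
    have hv : max y z ∈ I := by
      rcases max_choice y z with h | h <;> rw [h] <;> assumption
    have hux : min x z ≤ x := min_le_left _ _
    have hyv : y ≤ max y z := le_max_left _ _
    obtain ⟨α', β', h'⟩ := exists_affine_on_Icc hI hfc hgc hfm hgm h hu hv
      (hux.trans_lt (hxy.trans_le hyv))
    have hfx' := h' x ⟨hux, hxy.le.trans hyv⟩
    have hfy' := h' y ⟨hux.trans hxy.le, hyv⟩
    have hfz' := h' z ⟨min_le_right _ _, le_max_right _ _⟩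
    have hg : g y - g x ≠ 0 := fun h0 => hxy.ne' (hgm.injOn hy hx (sub_eq_zero.1 h0))
    have hα : α' = α := mul_right_cancel₀ hg (by linear_combination hfx' - hfy' - hfx + hfy)
    subst hα
    linear_combination hfz' + hfx - hfx'
  · rintro ⟨α, β, -, h⟩ n hn a ha
    obtain ⟨hmf, hf⟩ := qam_spec hI hfc hn ha
    obtain ⟨hmg, hg⟩ := qam_spec hI hgc hn ha
    have hn0 : (n : ℝ) ≠ 0 := by
      have : n ≠ 0 := by omega
      exact_mod_cast this
    refine hfm.injOn hmf hmg ?_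
    rw [hf, h _ hmg, hg, Finset.sum_congr rfl fun i _ => h _ (ha i), Finset.sum_add_distrib,
      ← Finset.mul_sum]
    simp only [Finset.sum_const, Finset.card_univ, Fintype.card_fin, nsmul_eq_mul]
    field_simp
end

section
/- Let f, g : I → ℝ be continuous and strictly monotone. The following are equivalent: (a) A^[f] ≤ A^[g]; (b) there exists ξ ∈ (0,1) such that A^[f]_ξ(a₁,a₂) ≤ A^[g]_ξ(a₁,a₂) for all a₁, a₂ ∈ I; (c) for every ξ ∈ (0,1) and all a₁, a₂ ∈ I, A^[f]_ξ(a₁,a₂) ≤ A^[g]_ξ(a₁,a₂). -/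
/-!
Both means are unchanged when a generator is replaced by its negative, so `f` and `g` may be taken
strictly increasing. Then `A^[f]_ξ ≤ A^[g]_ξ` says that `φ = g ∘ f⁻¹`, defined on the interval
`f(I)`, satisfies Jensen's inequality with the single weight `ξ`. Since `f` and `g` are continuous,
this forces `φ` to be convex (`chord_le`, `convexOn_of_weight`): if the difference between `φ` and a
chord had a positive maximum, the first point where it is attained could be written as a
`ξ`-weighted mean of a point strictly to its left and a point to its right, which contradicts the
inequality. Convexity of `φ` gives Jensen's inequality for all weights and all numbers of variables,
hence both the comparison of the unweighted means and that of all weighted two-variable means.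
Conversely, the comparison of unweighted means for `n = 2` is the weighted one with `ξ = 1/2`.
-/

open Set Function Filter

/-- The weighted two-variable quasi-arithmetic mean
`A^[f]_ξ(a₁,a₂) = f⁻¹(ξ f(a₁) + (1-ξ) f(a₂))`, with `f⁻¹` taken on `I`. -/
noncomputable def qamW (I : Set ℝ) (f : ℝ → ℝ) (ξ a₁ a₂ : ℝ) : ℝ :=
  Function.invFunOn f I (ξ * f a₁ + (1 - ξ) * f a₂)

/-- Outside the range `invFunOn` takes the same default value on both sides, and inside it the two
choices are made from the same predicate, so neither injectivity nor a range condition is needed. -/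
lemma invFunOn_neg_neg (I : Set ℝ) (f : ℝ → ℝ) (y : ℝ) :
    invFunOn (-f) I (-y) = invFunOn f I y := by
  have hp : (fun a => a ∈ I ∧ (-f) a = -y) = fun a => a ∈ I ∧ f a = y := by
    simp only [Pi.neg_apply, neg_inj]
  unfold invFunOn
  congr! 3

lemma qam_neg (I : Set ℝ) (f : ℝ → ℝ) {n : ℕ} (a : Fin n → ℝ) :
    qam I (-f) a = qam I f a := by
  unfold qam
  rw [← invFunOn_neg_neg I f]
  congr 1
  simp [Finset.sum_neg_distrib, neg_div]

lemma qamW_neg (I : Set ℝ) (f : ℝ → ℝ) (ξ a₁ a₂ : ℝ) :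
    qamW I (-f) ξ a₁ a₂ = qamW I f ξ a₁ a₂ := by
  unfold qamW
  rw [← invFunOn_neg_neg I f]
  congr 1
  simp only [Pi.neg_apply]
  ring

/-- If `g ∘ f⁻¹` satisfies Jensen's inequality with the weight `ξ`, then it lies below its chords.
The inverse is avoided by writing points of `f(I)` as values `f s`. -/
lemma chord_le {I : Set ℝ} (hI : I.OrdConnected) {f g : ℝ → ℝ}
    (hfc : ContinuousOn f I) (hgc : ContinuousOn g I) (hf : StrictMonoOn f I)
    {ξ : ℝ} (hξ : ξ ∈ Ioo (0 : ℝ) 1)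
    (H : ∀ u ∈ I, ∀ v ∈ I, ∀ s ∈ I, f s = ξ * f u + (1 - ξ) * f v →
      g s ≤ ξ * g u + (1 - ξ) * g v)
    {x y s a b : ℝ} (hx : x ∈ I) (hy : y ∈ I) (hxy : x < y) (hs : s ∈ Icc x y)
    (hab : a + b = 1) (hfs : f s = a * f x + b * f y) :
    g s ≤ a * g x + b * g y := by
  obtain ⟨h0, h1⟩ := hξ
  have hsub : Icc x y ⊆ I := hI.out hx hy
  have hfxy : 0 < f y - f x := sub_pos.2 (hf hx hy hxy)
  set α := (g y - g x) / (f y - f x) with hα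
  have hα' : α * (f y - f x) = g y - g x := div_mul_cancel₀ _ (ne_of_gt hfxy)
  -- `D` is the difference between `g ∘ f⁻¹` and the chord through the images of `x` and `y`.
  set D : ℝ → ℝ := fun t => g t - g x - α * (f t - f x) with hD
  have hDx : D x = 0 := by simp [hD]
  have hDy : D y = 0 := by simp only [hD]; linarith
  have hDc : ContinuousOn D (Icc x y) :=
    ((hgc.mono hsub).sub continuousOn_const).sub
      (continuousOn_const.mul ((hfc.mono hsub).sub continuousOn_const))
  have hDH : ∀ u ∈ I, ∀ v ∈ I, ∀ s ∈ I, f s = ξ * f u + (1 - ξ) * f v →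
      D s ≤ ξ * D u + (1 - ξ) * D v := by
    intro u hu v hv s hs h
    have := H u hu v hv s hs h
    simp only [hD, h]
    linarith
  have key : D s ≤ 0 := by
    by_contra! hpos
    obtain ⟨m, hm, hmax⟩ := isCompact_Icc.exists_isMaxOn ⟨s, hs⟩ hDc
    have hDm : 0 < D m := hpos.trans_le (hmax hs)
    -- `t` is the first point where the maximum is attained.
    have hK : IsCompact (Icc x y ∩ D ⁻¹' {D m}) :=
      isCompact_Icc.of_isClosed_subset
        (hDc.preimage_isClosed_of_isClosed isClosed_Icc isClosed_singleton) inter_subset_left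
    obtain ⟨t, ⟨ht, htm⟩, hmin⟩ := hK.exists_isLeast ⟨m, hm, rfl⟩
    have htm : D t = D m := htm
    have hxt : x < t := lt_of_le_of_ne ht.1 (by rintro rfl; linarith)
    have hty : t < y := lt_of_le_of_ne ht.2 (by rintro rfl; linarith)
    have htI := hsub ht
    have hfxt := hf hx htI hxt
    have hfty := hf htI hy hty
    -- A step small enough for both `f t - (1 - ξ) ε` and `f t + ξ ε` to stay in `[f x, f y]`.
    obtain ⟨ε, hε, hε1, hε2⟩ : ∃ ε : ℝ, 0 < ε ∧ ε ≤ f t - f x ∧ ε ≤ f y - f t :=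
      ⟨min (f t - f x) (f y - f t), lt_min (by linarith) (by linarith),
        min_le_left _ _, min_le_right _ _⟩
    have hivt := intermediate_value_Icc hxy.le (hfc.mono hsub)
    obtain ⟨u, hu, hfu⟩ := hivt (show f t - (1 - ξ) * ε ∈ Icc (f x) (f y) from
      ⟨by nlinarith, by nlinarith⟩)
    obtain ⟨v, hv, hfv⟩ := hivt (show f t + ξ * ε ∈ Icc (f x) (f y) from
      ⟨by nlinarith, by nlinarith⟩)
    have hut : u < t := (hf.lt_iff_lt (hsub hu) htI).1 (by rw [hfu]; nlinarith)
    have hDu : D u < D m := lt_of_le_of_ne (hmax hu) fun h => (hmin ⟨hu, h⟩).not_gt hut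
    have hDv : D v ≤ D m := hmax hv
    have := hDH u (hsub hu) v (hsub hv) t htI (by rw [hfu, hfv]; ring)
    nlinarith
  have hb : a = 1 - b := by linarith
  subst hb
  have hfs' : f s - f x = b * (f y - f x) := by rw [hfs]; ring
  have : α * (f s - f x) = b * (g y - g x) := by rw [hfs', ← hα']; ring
  simp only [hD] at key
  linarith

lemma convex_image {I : Set ℝ} (hI : I.OrdConnected) {f : ℝ → ℝ} (hfc : ContinuousOn f I) :
    Convex ℝ (f '' I) :=
  (hI.isPreconnected.image f hfc).ordConnected.convex

lemma invFunOn_spec {I : Set ℝ} {f : ℝ → ℝ} {z : ℝ} (hz : z ∈ f '' I) :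
    invFunOn f I z ∈ I ∧ f (invFunOn f I z) = z :=
  ⟨invFunOn_mem hz, invFunOn_eq hz⟩

lemma weighted_mem_image {I : Set ℝ} (hI : I.OrdConnected) {f : ℝ → ℝ} (hfc : ContinuousOn f I)
    {ξ : ℝ} (hξ : ξ ∈ Ioo (0 : ℝ) 1) {x y : ℝ} (hx : x ∈ I) (hy : y ∈ I) :
    ξ * f x + (1 - ξ) * f y ∈ f '' I :=
  convex_image hI hfc (mem_image_of_mem f hx) (mem_image_of_mem f hy) hξ.1.le
    (sub_nonneg.2 hξ.2.le) (by ring)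

lemma average_mem_image {I : Set ℝ} (hI : I.OrdConnected) {f : ℝ → ℝ} (hfc : ContinuousOn f I)
    {n : ℕ} (hn : 1 ≤ n) {a : Fin n → ℝ} (ha : ∀ i, a i ∈ I) :
    (∑ i, f (a i)) / n ∈ f '' I := by
  have hn' : (n : ℝ) ≠ 0 := by positivity
  have := (convex_image hI hfc).sum_mem (t := Finset.univ) (w := fun _ : Fin n => (n : ℝ)⁻¹)
    (z := fun i => f (a i)) (fun _ _ => by positivity) (by simp [hn'])
    (fun i _ => mem_image_of_mem f (ha i))
  simpa [← Finset.mul_sum, div_eq_inv_mul] using this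

/-- Comparison of two-variable means for one weight makes `g ∘ f⁻¹` convex on `f(I)`. -/
lemma convexOn_of_weight {I : Set ℝ} (hI : I.OrdConnected) {f g : ℝ → ℝ}
    (hfc : ContinuousOn f I) (hgc : ContinuousOn g I)
    (hf : StrictMonoOn f I) (hg : StrictMonoOn g I) {ξ : ℝ} (hξ : ξ ∈ Ioo (0 : ℝ) 1)
    (H : ∀ a₁ ∈ I, ∀ a₂ ∈ I, qamW I f ξ a₁ a₂ ≤ qamW I g ξ a₁ a₂) :
    ConvexOn ℝ (f '' I) (g ∘ invFunOn f I) := by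
  have hinv := hf.injOn.leftInvOn_invFunOn
  refine LinearOrder.convexOn_of_lt (convex_image hI hfc) ?_
  rintro _ ⟨x, hx, rfl⟩ _ ⟨y, hy, rfl⟩ hxy a b ha hb hab
  have hxy' : x < y := (hf.lt_iff_lt hx hy).1 hxy
  obtain ⟨s, hs, hfs⟩ := convex_image hI hfc (mem_image_of_mem f hx) (mem_image_of_mem f hy)
    ha.le hb.le hab
  simp only [smul_eq_mul] at hfs ⊢
  rw [← hfs]
  simp only [comp_apply, hinv hx, hinv hy, hinv hs]
  have hb' : a = 1 - b := by linarith
  have hsxy : s ∈ Icc x y :=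
    ⟨(hf.le_iff_le hx hs).1 (by rw [hfs, hb']; nlinarith),
      (hf.le_iff_le hs hy).1 (by rw [hfs, hb']; nlinarith)⟩
  refine chord_le hI hfc hgc hf hξ ?_ hx hy hxy' hsxy hab hfs
  intro u hu v hv t ht h
  obtain ⟨hG, hGe⟩ := invFunOn_spec (weighted_mem_image hI hgc hξ hu hv)
  have hle := H u hu v hv
  unfold qamW at hle
  rw [← h, hinv ht] at hle
  exact ((hg.le_iff_le ht hG).2 hle).trans_eq hGe

/-- For increasing generators, comparison for one weight implies all the other comparisons, by
Jensen's inequality for the convex function `g ∘ f⁻¹`. -/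
lemma increasing_case {I : Set ℝ} (hI : I.OrdConnected) {f g : ℝ → ℝ}
    (hfc : ContinuousOn f I) (hgc : ContinuousOn g I)
    (hf : StrictMonoOn f I) (hg : StrictMonoOn g I) {ξ : ℝ} (hξ : ξ ∈ Ioo (0 : ℝ) 1)
    (H : ∀ a₁ ∈ I, ∀ a₂ ∈ I, qamW I f ξ a₁ a₂ ≤ qamW I g ξ a₁ a₂) :
    qamLE I f g ∧
      ∀ η ∈ Ioo (0 : ℝ) 1, ∀ a₁ ∈ I, ∀ a₂ ∈ I, qamW I f η a₁ a₂ ≤ qamW I g η a₁ a₂ := by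
  have hconv := convexOn_of_weight hI hfc hgc hf hg hξ H
  have hinv := hf.injOn.leftInvOn_invFunOn
  constructor
  · intro n hn a ha
    have hn' : (n : ℝ) ≠ 0 := by positivity
    obtain ⟨hF, -⟩ := invFunOn_spec (average_mem_image hI hfc hn ha)
    obtain ⟨hG, hGe⟩ := invFunOn_spec (average_mem_image hI hgc hn ha)
    refine (hg.le_iff_le hF hG).1 ?_
    rw [hGe]
    have := hconv.map_sum_le (t := Finset.univ) (w := fun _ : Fin n => (n : ℝ)⁻¹)
      (p := fun i => f (a i)) (fun _ _ => by positivity) (by simp [hn'])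
      (fun i _ => mem_image_of_mem f (ha i))
    simpa [← Finset.smul_sum, ← Finset.mul_sum, div_eq_inv_mul, fun i => hinv (ha i)] using this
  · intro η hη x hx y hy
    obtain ⟨hF, -⟩ := invFunOn_spec (weighted_mem_image hI hfc hη hx hy)
    obtain ⟨hG, hGe⟩ := invFunOn_spec (weighted_mem_image hI hgc hη hx hy)
    refine (hg.le_iff_le hF hG).1 ?_
    rw [hGe]
    have := hconv.2 (mem_image_of_mem f hx) (mem_image_of_mem f hy) hη.1.le
      (sub_nonneg.2 hη.2.le) (by ring)
    simpa [hinv hx, hinv hy] using this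

/-- A strictly monotone generator can be replaced by an increasing one with the same means. -/
lemma exists_increasing_generator {I : Set ℝ} {f : ℝ → ℝ} (hfc : ContinuousOn f I)
    (hfm : StrictMonoOrAntiOn f I) :
    ∃ F : ℝ → ℝ, ContinuousOn F I ∧ StrictMonoOn F I ∧
      (∀ (n : ℕ) (a : Fin n → ℝ), qam I f a = qam I F a) ∧
      ∀ ξ a₁ a₂, qamW I f ξ a₁ a₂ = qamW I F ξ a₁ a₂ := by
  rcases hfm with h | h
  · exact ⟨f, hfc, h, fun _ _ => rfl, fun _ _ _ => rfl⟩
  · exact ⟨-f, hfc.neg, h.neg, fun _ a => (qam_neg I f a).symm,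
      fun ξ x y => (qamW_neg I f ξ x y).symm⟩

lemma qamW_half (I : Set ℝ) (f : ℝ → ℝ) (x y : ℝ) :
    qamW I f (1 / 2) x y = qam I f ![x, y] := by
  unfold qamW qam
  congr 1
  simp [Fin.sum_univ_two]
  ring

/-- `A^[f] ≤ A^[g]` is equivalent to the weighted two-variable
comparison for some weight `ξ ∈ (0,1)`, and to the weighted two-variable
comparison for every weight `ξ ∈ (0,1)`. -/
theorem qam_le_iff_weighted_two_var
    (I : Set ℝ) (hI : I.OrdConnected) (hInontriv : ∃ x ∈ I, ∃ y ∈ I, x < y)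
    (f g : ℝ → ℝ) (hfc : ContinuousOn f I) (hgc : ContinuousOn g I)
    (hfm : StrictMonoOrAntiOn f I) (hgm : StrictMonoOrAntiOn g I) :
    (qamLE I f g ↔
      ∃ ξ ∈ Ioo (0:ℝ) 1, ∀ a₁ ∈ I, ∀ a₂ ∈ I, qamW I f ξ a₁ a₂ ≤ qamW I g ξ a₁ a₂) ∧
    (qamLE I f g ↔
      ∀ ξ ∈ Ioo (0:ℝ) 1, ∀ a₁ ∈ I, ∀ a₂ ∈ I, qamW I f ξ a₁ a₂ ≤ qamW I g ξ a₁ a₂) := by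
  obtain ⟨F, hFc, hF, hfq, hfw⟩ := exists_increasing_generator hfc hfm
  obtain ⟨G, hGc, hG, hgq, hgw⟩ := exists_increasing_generator hgc hgm
  simp only [qamLE, hfq, hgq, hfw, hgw]
  have hhalf : (1 / 2 : ℝ) ∈ Ioo (0 : ℝ) 1 := by norm_num
  have ab : qamLE I F G →
      ∀ a₁ ∈ I, ∀ a₂ ∈ I, qamW I F (1 / 2) a₁ a₂ ≤ qamW I G (1 / 2) a₁ a₂ := by
    intro h x hx y hy
    rw [qamW_half, qamW_half]
    exact h 2 (by norm_num) _ (by simp [Fin.forall_fin_two, hx, hy])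
  refine ⟨⟨fun h => ⟨1 / 2, hhalf, ab h⟩, ?_⟩, fun h => ?_, fun h => ?_⟩
  · rintro ⟨ξ, hξ, h⟩
    exact (increasing_case hI hFc hGc hF hG hξ h).1
  · exact (increasing_case hI hFc hGc hF hG hhalf (ab h)).2
  · exact (increasing_case hI hFc hGc hF hG hhalf (h _ hhalf)).1
end

section
/- Let x₀ be an interior point of I and let f : I → ℝ be continuous and strictly monotone, right-differentiable at x₀ with f'₊(x₀) ≠ 0. If g : I → ℝ is continuous and strictly monotone and A^[g] is comparable with A^[f] (that is, A^[f] ≤ A^[g] or A^[g] ≤ A^[f]), then g is right-differentiable at x₀ and g'₊(x₀) ≠ 0. (The analogous statement holds for left-sided derivatives.) -/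
/-!
Replacing `f` by `-f` does not affect the hypotheses or the conclusion, so `f` may be taken to be
increasing. Put `h = g ∘ f⁻¹` on the interval `f(I)`. Comparability of the two means, applied to
pairs of points, says that `h` or `-h` is midpoint convex; being continuous, it is convex
(`convexOn_of_midpoint`). Hence `h` has a right derivative at the interior point `f x₀`. A vanishing
right derivative would make `f x₀` a minimum of the convex function `± h`, hence `x₀` a minimum of
`± g` on `I`, which is impossible for a strictly monotone function at an interior point. The chain
rule for `g = h ∘ f` then gives the claim (`exists_rightDeriv_of_midLE`).
-/

open Set Function Filter

/-- At the `f`-mean of any two points of `I`, the value of `g` is at most the average of its values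
at these points; in other words, `g ∘ f⁻¹` is midpoint convex on `f '' I`. -/
def MidLE (I : Set ℝ) (f g : ℝ → ℝ) : Prop :=
  ∀ x ∈ I, ∀ y ∈ I, ∃ m ∈ I, f m = (f x + f y) / 2 ∧ g m ≤ (g x + g y) / 2

/-- A continuous midpoint convex function on an interval is convex. If it exceeded one of its
chords, the difference with the chord would have a positive maximum; midpoint convexity fails at
the leftmost point where this maximum is attained. -/
lemma convexOn_of_midpoint {J : Set ℝ} (hJ : J.OrdConnected) {h : ℝ → ℝ} (hc : ContinuousOn h J)
    (hm : ∀ x ∈ J, ∀ y ∈ J, h ((x + y) / 2) ≤ (h x + h y) / 2) : ConvexOn ℝ J h := by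
  refine LinearOrder.convexOn_of_lt hJ.convex ?_
  intro x hx y hy hxy a b ha hb hab
  by_contra! hlt
  simp only [smul_eq_mul] at hlt
  have hsub : Icc x y ⊆ J := hJ.out hx hy
  obtain ⟨s, hs⟩ : ∃ s, s * (y - x) = h y - h x :=
    ⟨(h y - h x) / (y - x), div_mul_cancel₀ _ (by linarith)⟩
  set φ : ℝ → ℝ := fun t => h t - (h x + s * (t - x)) with hφ
  have hφc : ContinuousOn φ (Icc x y) := (hc.mono hsub).sub (by fun_prop)
  have hz : a * x + b * y ∈ Icc x y := by
    obtain rfl : a = 1 - b := by linarith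
    constructor <;> nlinarith
  have hφz : 0 < φ (a * x + b * y) := by
    have h1 : h x + s * (a * x + b * y - x) = a * h x + b * h y := by
      obtain rfl : a = 1 - b := by linarith
      linear_combination b * hs
    simp only [hφ]
    linarith
  obtain ⟨w, hw, hwmax⟩ := isCompact_Icc.exists_isMaxOn ⟨_, hz⟩ hφc
  have hM : 0 < φ w := hφz.trans_le (hwmax hz)
  have hK : IsCompact (Icc x y ∩ φ ⁻¹' Ici (φ w)) :=
    isCompact_Icc.of_isClosed_subset (hφc.preimage_isClosed_of_isClosed isClosed_Icc isClosed_Ici)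
      inter_subset_left
  obtain ⟨c, ⟨hcI, hcw⟩, hcmin⟩ := hK.exists_isLeast ⟨w, hw, mem_preimage.2 self_mem_Ici⟩
  have hcw' : φ w ≤ φ c := hcw
  have hφx : φ x = 0 := by simp [hφ]
  have hφy : φ y = 0 := by simp only [hφ]; linarith
  have hxc : x < c := lt_of_le_of_ne hcI.1 (by rintro rfl; linarith)
  have hcy : c < y := lt_of_le_of_ne hcI.2 (by rintro rfl; linarith)
  obtain ⟨δ, hδ, hδ1, hδ2⟩ : ∃ δ > 0, δ ≤ c - x ∧ δ ≤ y - c :=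
    ⟨min (c - x) (y - c), lt_min (by linarith) (by linarith), min_le_left _ _, min_le_right _ _⟩
  have hl : c - δ ∈ Icc x y := ⟨by linarith, by linarith⟩
  have hr : c + δ ∈ Icc x y := ⟨by linarith, by linarith⟩
  have h1 : φ (c - δ) < φ w := by
    by_contra! hcon
    have := hcmin ⟨hl, hcon⟩
    linarith
  have h2 : φ (c + δ) ≤ φ w := hwmax hr
  have h3 := hm _ (hsub hl) _ (hsub hr)
  rw [show (c - δ + (c + δ)) / 2 = c by ring] at h3
  simp only [hφ] at h1 h2 hcw'
  nlinarith

lemma ordConnected_image {I : Set ℝ} (hI : I.OrdConnected) {f : ℝ → ℝ} (hf : ContinuousOn f I) :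
    (f '' I).OrdConnected :=
  (hI.isPreconnected.image f hf).ordConnected

lemma continuousOn_invFunOn {I : Set ℝ} (hI : I.OrdConnected) {f : ℝ → ℝ}
    (hfc : ContinuousOn f I) (hf : StrictMonoOn f I) :
    ContinuousOn (invFunOn f I) (f '' I) := by
  have := hI
  have := ordConnected_image hI hfc
  rw [continuousOn_iff_continuous_domRestrict]
  have he : Continuous fun y => ((hf.orderIso f I).symm y : ℝ) :=
    continuous_subtype_val.comp (hf.orderIso f I).symm.continuous
  convert he using 1
  funext y
  obtain ⟨x, rfl⟩ := (hf.orderIso f I).surjective y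
  rw [OrderIso.symm_apply_apply]
  exact hf.injOn.leftInvOn_invFunOn x.2

/-- The two-variable quasi-arithmetic mean lies in `I` and has the expected `f`-value, so that
`invFunOn` takes no junk value there. -/
lemma qam_pair {I : Set ℝ} (hI : I.OrdConnected) {f : ℝ → ℝ} (hf : ContinuousOn f I)
    {x y : ℝ} (hx : x ∈ I) (hy : y ∈ I) :
    qam I f ![x, y] ∈ I ∧ f (qam I f ![x, y]) = (f x + f y) / 2 := by
  have hmem : (f x + f y) / 2 ∈ f '' I := by
    have hu := (ordConnected_image hI hf).uIcc_subset (mem_image_of_mem f hx) (mem_image_of_mem f hy)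
    apply hu
    rw [mem_uIcc]
    rcases le_total (f x) (f y) with h | h
    · left; constructor <;> linarith
    · right; constructor <;> linarith
  have hq : qam I f ![x, y] = invFunOn f I ((f x + f y) / 2) := by
    simp [qam, Fin.sum_univ_two]
  rw [hq]
  exact ⟨invFunOn_mem hmem, invFunOn_eq hmem⟩

lemma midLE_or_midLE_neg {I : Set ℝ} (hI : I.OrdConnected) {f g : ℝ → ℝ}
    (hfc : ContinuousOn f I) (hgc : ContinuousOn g I) (hgm : StrictMonoOrAntiOn g I)
    (hcomp : qamLE I f g ∨ qamLE I g f) :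
    MidLE I f g ∨ MidLE I f (-g) := by
  have hpair : ∀ x ∈ I, ∀ y ∈ I, ∀ i, ![x, y] i ∈ I := by
    intro x hx y hy i
    fin_cases i <;> simpa
  rcases hcomp with h | h <;> rcases hgm with hg | hg
  · left
    intro x hx y hy
    obtain ⟨h1, h2⟩ := qam_pair hI hfc hx hy
    obtain ⟨h3, h4⟩ := qam_pair hI hgc hx hy
    have := hg.monotoneOn h1 h3 (h 2 (by norm_num) _ (hpair x hx y hy))
    exact ⟨_, h1, h2, by linarith⟩
  · right
    intro x hx y hy
    obtain ⟨h1, h2⟩ := qam_pair hI hfc hx hy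
    obtain ⟨h3, h4⟩ := qam_pair hI hgc hx hy
    have := hg.antitoneOn h1 h3 (h 2 (by norm_num) _ (hpair x hx y hy))
    exact ⟨_, h1, h2, by simp only [Pi.neg_apply]; linarith⟩
  · right
    intro x hx y hy
    obtain ⟨h1, h2⟩ := qam_pair hI hfc hx hy
    obtain ⟨h3, h4⟩ := qam_pair hI hgc hx hy
    have := hg.monotoneOn h3 h1 (h 2 (by norm_num) _ (hpair x hx y hy))
    exact ⟨_, h1, h2, by simp only [Pi.neg_apply]; linarith⟩
  · left
    intro x hx y hy
    obtain ⟨h1, h2⟩ := qam_pair hI hfc hx hy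
    obtain ⟨h3, h4⟩ := qam_pair hI hgc hx hy
    have := hg.antitoneOn h3 h1 (h 2 (by norm_num) _ (hpair x hx y hy))
    exact ⟨_, h1, h2, by linarith⟩

lemma MidLE.neg_left {I : Set ℝ} {f g : ℝ → ℝ} (h : MidLE I f g) : MidLE I (-f) g := by
  intro x hx y hy
  obtain ⟨m, hm, h1, h2⟩ := h x hx y hy
  exact ⟨m, hm, by simp only [Pi.neg_apply]; linarith, h2⟩

lemma StrictMonoOrAntiOn.neg {I : Set ℝ} {g : ℝ → ℝ} (h : StrictMonoOrAntiOn g I) :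
    StrictMonoOrAntiOn (-g) I :=
  h.symm.imp StrictAntiOn.neg StrictMonoOn.neg

/-- The case of an increasing `f` and a convex `g ∘ f⁻¹`. -/
lemma exists_rightDeriv_of_midLE {I : Set ℝ} (hI : I.OrdConnected) {x₀ : ℝ}
    (hx₀ : x₀ ∈ interior I) {f g : ℝ → ℝ} (hfc : ContinuousOn f I) (hgc : ContinuousOn g I)
    (hf : StrictMonoOn f I) (hgm : StrictMonoOrAntiOn g I)
    {d : ℝ} (hd : d ≠ 0) (hfd : HasDerivWithinAt f d (Ioi x₀) x₀) (hmid : MidLE I f g) :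
    ∃ d' : ℝ, d' ≠ 0 ∧ HasDerivWithinAt g d' (Ioi x₀) x₀ := by
  have hxI : x₀ ∈ I := interior_subset hx₀
  have hnhds : I ∈ nhds x₀ := mem_interior_iff_mem_nhds.1 hx₀
  have hJ := ordConnected_image hI hfc
  set h : ℝ → ℝ := g ∘ invFunOn f I with hh
  have hinv : ∀ x ∈ I, invFunOn f I (f x) = x := hf.injOn.leftInvOn_invFunOn
  have hhf : ∀ x ∈ I, h (f x) = g x := fun x hx => by simp only [hh, comp_apply, hinv x hx]
  have hhc : ContinuousOn h (f '' I) :=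
    hgc.comp (continuousOn_invFunOn hI hfc hf) fun y hy => invFunOn_mem hy
  have hconv : ConvexOn ℝ (f '' I) h := by
    refine convexOn_of_midpoint hJ hhc ?_
    rintro _ ⟨x, hx, rfl⟩ _ ⟨y, hy, rfl⟩
    obtain ⟨m, hm, h1, h2⟩ := hmid x hx y hy
    rw [← h1, hhf m hm, hhf x hx, hhf y hy]
    exact h2
  obtain ⟨a, b, ⟨hax, hxb⟩, hab⟩ : ∃ a b, x₀ ∈ Ioo a b ∧ Icc a b ⊆ I := by
    obtain ⟨a, b, hx, hab⟩ := mem_nhds_iff_exists_Ioo_subset.1 hnhds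
    refine ⟨(a + x₀) / 2, (x₀ + b) / 2, ⟨by linarith [hx.1], by linarith [hx.2]⟩, ?_⟩
    intro t ht
    exact hab ⟨by linarith [hx.1, ht.1], by linarith [hx.2, ht.2]⟩
  have haI : a ∈ I := hab ⟨le_rfl, by linarith⟩
  have hbI : b ∈ I := hab ⟨by linarith, le_rfl⟩
  have hint : f x₀ ∈ interior (f '' I) := by
    rw [mem_interior_iff_mem_nhds]
    exact mem_of_superset (Icc_mem_nhds (hf haI hxI hax) (hf hxI hbI hxb))
      (hJ.out (mem_image_of_mem f haI) (mem_image_of_mem f hbI))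
  have hhd := hconv.hasDerivWithinAt_rightDeriv_of_mem_interior hint
  have hne : derivWithin h (Ioi (f x₀)) (f x₀) ≠ 0 := by
    intro h0
    have hmin := hconv.isMinOn_of_rightDeriv_eq_zero hint h0
    have hgmin : ∀ x ∈ I, g x₀ ≤ g x := by
      intro x hx
      have := hmin (mem_image_of_mem f hx)
      simpa only [mem_ofPred_eq, hhf x hx, hhf x₀ hxI] using this
    rcases hgm with hg | hg
    · exact absurd (hgmin a haI) (not_le.2 (hg haI hxI hax))
    · exact absurd (hgmin b hbI) (not_le.2 (hg hxI hbI hxb))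
  refine ⟨_, mul_ne_zero hne hd, ?_⟩
  rw [← hasDerivWithinAt_inter hnhds]
  have hmaps : MapsTo f (Ioi x₀ ∩ I) (Ioi (f x₀)) := fun x hx => hf hxI hx.2 hx.1
  exact (hhd.comp x₀ (hfd.mono inter_subset_left) hmaps).congr
    (fun x hx => (hhf x hx.2).symm) (hhf x₀ hxI).symm

/-- Theorem 2: if `f` is right-differentiable at an interior point `x₀`
with `f'₊(x₀) ≠ 0`, and `A^[g]` is comparable with `A^[f]`, then `g` is
right-differentiable at `x₀` with `g'₊(x₀) ≠ 0`. -/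
theorem right_deriv_nonzero_of_comparable
    (I : Set ℝ) (hI : I.OrdConnected) (hInontriv : ∃ x ∈ I, ∃ y ∈ I, x < y)
    (x₀ : ℝ) (hx₀ : x₀ ∈ interior I)
    (f g : ℝ → ℝ)
    (hfc : ContinuousOn f I) (hgc : ContinuousOn g I)
    (hfm : StrictMonoOrAntiOn f I) (hgm : StrictMonoOrAntiOn g I)
    (d : ℝ) (hd : d ≠ 0) (hfd : HasDerivWithinAt f d (Ioi x₀) x₀)
    (hcomp : qamLE I f g ∨ qamLE I g f) :
    ∃ d' : ℝ, d' ≠ 0 ∧ HasDerivWithinAt g d' (Ioi x₀) x₀ := by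
  -- Normalize `f` to be increasing.
  obtain ⟨F, e, he, hFc, hFm, hFd, hF⟩ : ∃ (F : ℝ → ℝ) (e : ℝ), e ≠ 0 ∧ ContinuousOn F I ∧
      StrictMonoOn F I ∧ HasDerivWithinAt F e (Ioi x₀) x₀ ∧ (MidLE I F g ∨ MidLE I F (-g)) := by
    have hmid := midLE_or_midLE_neg hI hfc hgc hgm hcomp
    rcases hfm with hf | hf
    · exact ⟨f, d, hd, hfc, hf, hfd, hmid⟩
    · exact ⟨-f, -d, neg_ne_zero.2 hd, hfc.neg, hf.neg, hfd.neg,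
        hmid.imp MidLE.neg_left MidLE.neg_left⟩
  rcases hF with h | h
  · exact exists_rightDeriv_of_midLE hI hx₀ hFc hgc hFm hgm he hFd h
  · obtain ⟨d', hd', hg'⟩ := exists_rightDeriv_of_midLE hI hx₀ hFc hgc.neg hFm hgm.neg he hFd h
    exact ⟨-d', neg_ne_zero.2 hd', by simpa using hg'.neg⟩
end
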